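/- Let p be an odd prime and r ≥ 1 an integer. Let D̃(r) be the subgroup of GL₂(ℤ_p) generated by the invertible diagonal matrices together with K(r) (this subgroup equals the set of products d·k with d diagonal invertible and k ∈ K(r)). If ξ₁, ξ₂ : D̃(r) → ℂˣ are group homomorphisms that agree on every invertible diagonal matrix over ℤ_p, then ξ₁ = ξ₂. -/

import Mathlib

/-- The principal congruence subgroup `K(m)` of `GL₂(ℤ_p)`: matrices `g` with every entry of
`g − 1` lying in `p^m ℤ_p`. -/
def congK (p : ℕ) [Fact p.Prime] (m : ℕ) : Subgroup (Matrix (Fin 2) (Fin 2) ℤ_[p])ˣ where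
  carrier := {g | ∀ i j, (p : ℤ_[p]) ^ m ∣ ((g : Matrix (Fin 2) (Fin 2) ℤ_[p]) - 1) i j}
  one_mem' := by
    intro i j
    simp
  mul_mem' := by
    intro a b ha hb i j
    have key : ((a * b : (Matrix (Fin 2) (Fin 2) ℤ_[p])ˣ) : Matrix (Fin 2) (Fin 2) ℤ_[p]) - 1 =
        ((a : Matrix (Fin 2) (Fin 2) ℤ_[p]) - 1) * ((b : Matrix (Fin 2) (Fin 2) ℤ_[p]) - 1) +
          (((a : Matrix (Fin 2) (Fin 2) ℤ_[p]) - 1) + ((b : Matrix (Fin 2) (Fin 2) ℤ_[p]) - 1)) := by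
      rw [Units.val_mul]
      noncomm_ring
    rw [key]
    simp only [Matrix.add_apply, Matrix.mul_apply]
    exact dvd_add (Finset.dvd_sum fun k _ => (ha i k).mul_right _) (dvd_add (ha i j) (hb i j))
  inv_mem' := by
    intro a ha i j
    have key : ((a⁻¹ : (Matrix (Fin 2) (Fin 2) ℤ_[p])ˣ) : Matrix (Fin 2) (Fin 2) ℤ_[p]) - 1 =
        ((a⁻¹ : (Matrix (Fin 2) (Fin 2) ℤ_[p])ˣ) : Matrix (Fin 2) (Fin 2) ℤ_[p]) *
          (1 - (a : Matrix (Fin 2) (Fin 2) ℤ_[p])) := by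
      rw [mul_sub, mul_one, Units.inv_mul]
    rw [key, Matrix.mul_apply]
    refine Finset.dvd_sum fun k _ => Dvd.dvd.mul_left ?_ _
    have hk : ((1 : Matrix (Fin 2) (Fin 2) ℤ_[p]) - (a : Matrix (Fin 2) (Fin 2) ℤ_[p])) k j =
        -(((a : Matrix (Fin 2) (Fin 2) ℤ_[p]) - 1) k j) := by
      simp [Matrix.sub_apply]
    rw [hk]
    exact dvd_neg.mpr (ha k j)


/-- The subgroup `D̃(r)` of `GL₂(ℤ_p)` generated by the invertible diagonal matrices together
with `K(r)`. -/
noncomputable def Dtilde (p : ℕ) [Fact p.Prime] (r : ℕ) : Subgroup (Matrix (Fin 2) (Fin 2) ℤ_[p])ˣ :=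
  Subgroup.closure
    ({g : (Matrix (Fin 2) (Fin 2) ℤ_[p])ˣ |
        ∀ i j, i ≠ j → (g : Matrix (Fin 2) (Fin 2) ℤ_[p]) i j = 0} ∪
      (congK p r : Set (Matrix (Fin 2) (Fin 2) ℤ_[p])ˣ))

/-- Upper unipotent matrix. -/
noncomputable def upU (p : ℕ) [Fact p.Prime] (x : ℤ_[p]) : (Matrix (Fin 2) (Fin 2) ℤ_[p])ˣ :=
  ⟨!![1, x; 0, 1], !![1, -x; 0, 1], by simp [Matrix.one_fin_two], by simp [Matrix.one_fin_two]⟩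

/-- Lower unipotent matrix. -/
noncomputable def loU (p : ℕ) [Fact p.Prime] (x : ℤ_[p]) : (Matrix (Fin 2) (Fin 2) ℤ_[p])ˣ :=
  ⟨!![1, 0; x, 1], !![1, 0; -x, 1], by simp [Matrix.one_fin_two], by simp [Matrix.one_fin_two]⟩

/-- Diagonal matrix. -/
noncomputable def dgU (p : ℕ) [Fact p.Prime] (u v : ℤ_[p]ˣ) : (Matrix (Fin 2) (Fin 2) ℤ_[p])ˣ :=
  ⟨!![(u : ℤ_[p]), 0; 0, (v : ℤ_[p])], !![((u⁻¹ : ℤ_[p]ˣ) : ℤ_[p]), 0; 0, ((v⁻¹ : ℤ_[p]ˣ) : ℤ_[p])],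
    by simp [Matrix.one_fin_two], by simp [Matrix.one_fin_two]⟩

lemma dgU_diag (p : ℕ) [Fact p.Prime] (u v : ℤ_[p]ˣ) (i j : Fin 2) (h : i ≠ j) :
    (dgU p u v : Matrix (Fin 2) (Fin 2) ℤ_[p]) i j = 0 := by
  fin_cases i <;> fin_cases j <;> simp_all [dgU]

lemma dgU_mem (p : ℕ) [Fact p.Prime] (r : ℕ) (u v : ℤ_[p]ˣ) : dgU p u v ∈ Dtilde p r :=
  Subgroup.subset_closure (Or.inl (dgU_diag p u v))

lemma upU_mem (p : ℕ) [Fact p.Prime] (r : ℕ) (x : ℤ_[p]) (hx : (p : ℤ_[p]) ^ r ∣ x) :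
    upU p x ∈ Dtilde p r := by
  refine Subgroup.subset_closure (Or.inr ?_)
  intro i j
  fin_cases i <;> fin_cases j <;> simp [upU, hx]

lemma loU_mem (p : ℕ) [Fact p.Prime] (r : ℕ) (x : ℤ_[p]) (hx : (p : ℤ_[p]) ^ r ∣ x) :
    loU p x ∈ Dtilde p r := by
  refine Subgroup.subset_closure (Or.inr ?_)
  intro i j
  fin_cases i <;> fin_cases j <;> simp [loU, hx]

lemma char_trivial {G : Type*} [Group G] (ξ : G →* ℂˣ) (d u : G) (h : d * u = u * u * d) :
    ξ u = 1 := by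
  have h1 := congrArg ξ h
  simp only [map_mul] at h1
  rw [mul_comm] at h1
  have h2 := mul_right_cancel h1
  exact (left_eq_mul.mp h2)

lemma isUnit_two_padic (p : ℕ) [Fact p.Prime] (hp : Odd p) : IsUnit (2 : ℤ_[p]) := by
  have h : ((2 : ℕ) : ℤ_[p]) = 2 := by norm_num
  rw [← h, PadicInt.isUnit_iff, PadicInt.norm_natCast_eq_one_iff]
  exact hp.coprime_two_right

lemma char_upU (p : ℕ) [Fact p.Prime] (hp : Odd p) (r : ℕ) (ξ : Dtilde p r →* ℂˣ)
    (x : ℤ_[p]) (hx : upU p x ∈ Dtilde p r) : ξ ⟨upU p x, hx⟩ = 1 := by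
  obtain ⟨t, ht⟩ := isUnit_two_padic p hp
  apply char_trivial ξ ⟨dgU p t 1, dgU_mem p r t 1⟩
  apply Subtype.ext
  apply Units.ext
  simp [dgU, upU, ht, mul_comm]
  ring

lemma char_loU (p : ℕ) [Fact p.Prime] (hp : Odd p) (r : ℕ) (ξ : Dtilde p r →* ℂˣ)
    (x : ℤ_[p]) (hx : loU p x ∈ Dtilde p r) : ξ ⟨loU p x, hx⟩ = 1 := by
  obtain ⟨t, ht⟩ := isUnit_two_padic p hp
  apply char_trivial ξ ⟨dgU p 1 t, dgU_mem p r 1 t⟩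
  apply Subtype.ext
  apply Units.ext
  simp [dgU, loU, ht, mul_comm]
  ring

lemma congK_decomp (p : ℕ) [Fact p.Prime] (r : ℕ) (hr : 1 ≤ r)
    (k : (Matrix (Fin 2) (Fin 2) ℤ_[p])ˣ) (hk : k ∈ congK p r) :
    ∃ (x y : ℤ_[p]) (u v : ℤ_[p]ˣ), (p : ℤ_[p]) ^ r ∣ x ∧ (p : ℤ_[p]) ^ r ∣ y ∧
      k = loU p x * dgU p u v * upU p y := by
  have h00 : (p : ℤ_[p]) ^ r ∣ (k : Matrix (Fin 2) (Fin 2) ℤ_[p]) 0 0 - 1 := by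
    simpa using hk 0 0
  have h01 : (p : ℤ_[p]) ^ r ∣ (k : Matrix (Fin 2) (Fin 2) ℤ_[p]) 0 1 := by
    simpa using hk 0 1
  have h10 : (p : ℤ_[p]) ^ r ∣ (k : Matrix (Fin 2) (Fin 2) ℤ_[p]) 1 0 := by
    simpa using hk 1 0
  have hdet : IsUnit (k : Matrix (Fin 2) (Fin 2) ℤ_[p]).det :=
    (Matrix.isUnit_iff_isUnit_det _).mp k.isUnit
  have hM := Matrix.eta_fin_two (k : Matrix (Fin 2) (Fin 2) ℤ_[p])
  rw [Matrix.det_fin_two] at hdet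
  generalize (k : Matrix (Fin 2) (Fin 2) ℤ_[p]) 0 0 = a at *
  generalize (k : Matrix (Fin 2) (Fin 2) ℤ_[p]) 0 1 = b at *
  generalize (k : Matrix (Fin 2) (Fin 2) ℤ_[p]) 1 0 = c at *
  generalize (k : Matrix (Fin 2) (Fin 2) ℤ_[p]) 1 1 = d at *
  have ha : IsUnit a := by
    by_contra hn
    have h1 : a ∈ IsLocalRing.maximalIdeal ℤ_[p] := hn
    have h2 : a - 1 ∈ IsLocalRing.maximalIdeal ℤ_[p] := by
      rw [PadicInt.maximalIdeal_eq_span_p, Ideal.mem_span_singleton]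
      exact (dvd_pow_self _ (by omega)).trans h00
    have h3 : (1 : ℤ_[p]) ∈ IsLocalRing.maximalIdeal ℤ_[p] := by
      have := Ideal.sub_mem _ h1 h2
      simpa using this
    exact h3 isUnit_one
  obtain ⟨u, rfl⟩ := ha
  have hi : (u : ℤ_[p]) * ((u⁻¹ : ℤ_[p]ˣ) : ℤ_[p]) = 1 := u.mul_inv
  generalize hw : ((u⁻¹ : ℤ_[p]ˣ) : ℤ_[p]) = w at *
  have hv : IsUnit (d - c * w * b) := by
    have : (u : ℤ_[p]) * (d - c * w * b) = u * d - b * c := by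
      linear_combination (-(c * b)) * hi
    rw [← this] at hdet
    exact isUnit_of_mul_isUnit_right hdet
  obtain ⟨v, hv⟩ := hv
  refine ⟨c * w, w * b, u, v, h10.mul_right _, h01.mul_left _, ?_⟩
  apply Units.ext
  rw [hM]
  simp only [loU, dgU, upU, Units.val_mul, Matrix.mul_fin_two, hv]
  ext i j
  fin_cases i <;> fin_cases j <;> simp
  · linear_combination (-b) * hi
  · linear_combination (-c) * hi
  · linear_combination (-(c * w * b)) * hi

/-- Two characters of `D̃(r)` agreeing on all invertible diagonal matrices are equal. -/
theorem stmt_8 (p : ℕ) [Fact p.Prime] (hp : Odd p) (r : ℕ) (hr : 1 ≤ r)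
    (ξ₁ ξ₂ : Dtilde p r →* ℂˣ)
    (hagree : ∀ (d : (Matrix (Fin 2) (Fin 2) ℤ_[p])ˣ) (hd : d ∈ Dtilde p r),
      (∀ i j, i ≠ j → (d : Matrix (Fin 2) (Fin 2) ℤ_[p]) i j = 0) →
        ξ₁ ⟨d, hd⟩ = ξ₂ ⟨d, hd⟩) :
    ξ₁ = ξ₂ := by
  ext1 ⟨g, hg⟩
  induction hg using Subgroup.closure_induction with
  | mem x hx =>
    rcases hx with hx | hx
    · exact hagree x _ hx
    · obtain ⟨a, b, u, v, ha, hb, rfl⟩ := congK_decomp p r hr x hx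
      have key : ∀ ξ : Dtilde p r →* ℂˣ, ∀ h,
          ξ ⟨loU p a * dgU p u v * upU p b, h⟩ = ξ ⟨dgU p u v, dgU_mem p r u v⟩ := by
        intro ξ h
        have : (⟨loU p a * dgU p u v * upU p b, h⟩ : Dtilde p r) =
          ⟨loU p a, loU_mem p r a ha⟩ * ⟨dgU p u v, dgU_mem p r u v⟩ *
            ⟨upU p b, upU_mem p r b hb⟩ := rfl
        rw [this, map_mul, map_mul, char_loU p hp, char_upU p hp, one_mul, mul_one]
      exact (key ξ₁ _).trans ((hagree _ _ (dgU_diag p u v)).trans (key ξ₂ _).symm)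
  | one => exact (map_one ξ₁).trans (map_one ξ₂).symm
  | mul x y hx hy h1 h2 =>
    have e : (⟨x * y, Subgroup.mul_mem _ hx hy⟩ : Dtilde p r) = ⟨x, hx⟩ * ⟨y, hy⟩ := rfl
    exact (congrArg ξ₁ e).trans ((map_mul ξ₁ _ _).trans
      ((congrArg₂ (· * ·) h1 h2).trans (map_mul ξ₂ _ _).symm))
  | inv x hx h1 =>
    have e : (⟨x⁻¹, Subgroup.inv_mem _ hx⟩ : Dtilde p r) = ⟨x, hx⟩⁻¹ := rfl
    exact (congrArg ξ₁ e).trans ((map_inv ξ₁ _).trans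
      ((congrArg (·⁻¹) h1).trans (map_inv ξ₂ _).symm))
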